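/- Let 𝔅 be a homothecy invariant basis of nonempty bounded open convex subsets of ℝⁿ, and let μ, ν be locally finite nonnegative Borel measures on ℝⁿ, with μ nonzero and doubling with respect to 𝔅. If there exists c > 0 such that ν({x ∈ ℝⁿ : M_{𝔅,μ}(1_E)(x) > 1/2}) ≤ c·ν(E) for every Borel set E, then 𝔅 differentiates L^∞(ν) with respect to μ: for every bounded Borel measurable function f on ℝⁿ, for ν-almost every x ∈ ℝⁿ, every sequence (B_k) of sets in 𝔅 with x ∈ B_k, μ(B_k) > 0, and diam(B_k) → 0 satisfies (1/μ(B_k)) ∫_{B_k} f dμ → f(x). -/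

import Mathlib

open MeasureTheory Set Filter
open scoped ENNReal Topology Pointwise

noncomputable section

/-- The maximal operator `M_{𝔅,μ}` associated to a measure `μ` and a collection `𝔅`
of subsets of `ℝⁿ`, applied to `f` at the point `x` (valued in `ℝ≥0∞`; it equals `0`
outside the union of `𝔅`). -/
noncomputable def maxOp {n : ℕ} (μ : Measure (EuclideanSpace ℝ (Fin n)))
    (𝔅 : Set (Set (EuclideanSpace ℝ (Fin n))))
    (f : EuclideanSpace ℝ (Fin n) → ℝ) (x : EuclideanSpace ℝ (Fin n)) : ℝ≥0∞ :=
  ⨆ (B : Set (EuclideanSpace ℝ (Fin n))) (_ : B ∈ 𝔅) (_ : x ∈ B) (_ : 0 < μ B),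
    (∫⁻ y in B, ENNReal.ofReal |f y| ∂μ) / μ B

/-- A collection of sets is homothecy invariant if it is closed under translations and
positive dilations. -/
def HomothecyInvariant {n : ℕ} (𝔅 : Set (Set (EuclideanSpace ℝ (Fin n)))) : Prop :=
  ∀ B ∈ 𝔅, (∀ y : EuclideanSpace ℝ (Fin n), y +ᵥ B ∈ 𝔅) ∧ (∀ s : ℝ, 0 < s → s • B ∈ 𝔅)

/-- `μ` is doubling with respect to the collection `𝔅`, with constant `Δ`: whenever
`B ∈ 𝔅` and a translate of the dilate `2·B` contains `B`, its measure is at most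
`Δ·μ(B)`. -/
def DoublingWrt {n : ℕ} (μ : Measure (EuclideanSpace ℝ (Fin n)))
    (𝔅 : Set (Set (EuclideanSpace ℝ (Fin n)))) (Δ : ℝ) : Prop :=
  ∀ B ∈ 𝔅, ∀ σ : EuclideanSpace ℝ (Fin n),
    B ⊆ σ +ᵥ (2 : ℝ) • B → μ (σ +ᵥ (2 : ℝ) • B) ≤ ENNReal.ofReal Δ * μ B

/-- A member of a basis of convex sets: nonempty, bounded, open and convex. -/
def IsConvexBasisSet {n : ℕ} (B : Set (EuclideanSpace ℝ (Fin n))) : Prop :=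
  B.Nonempty ∧ Bornology.IsBounded B ∧ IsOpen B ∧ Convex ℝ B

/-- An open axis-parallel rectangle in `ℝⁿ`. -/
def IsAxisRect {n : ℕ} (R : Set (EuclideanSpace ℝ (Fin n))) : Prop :=
  ∃ a b : Fin n → ℝ, (∀ i, a i < b i) ∧ R = {x | ∀ i, x i ∈ Set.Ioo (a i) (b i)}

/-- An open rectangle (possibly rotated rectangular parallelepiped) in `ℝⁿ`:
the image of an open axis-parallel rectangle under a rigid motion. -/
def IsRect {n : ℕ} (R : Set (EuclideanSpace ℝ (Fin n))) : Prop :=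
  ∃ (f : EuclideanSpace ℝ (Fin n) ≃ᵢ EuclideanSpace ℝ (Fin n))
    (S : Set (EuclideanSpace ℝ (Fin n))), IsAxisRect S ∧ R = f '' S

/-- An open axis-parallel cube in `ℝⁿ`. -/
def IsAxisCube {n : ℕ} (C : Set (EuclideanSpace ℝ (Fin n))) : Prop :=
  ∃ (a : Fin n → ℝ) (s : ℝ), 0 < s ∧ C = {x | ∀ i, x i ∈ Set.Ioo (a i) (a i + s)}

/-- `M_{𝔅,μ}` is bounded on `L^p(ν)`. -/
def BoundedOnLp {n : ℕ} (μ ν : Measure (EuclideanSpace ℝ (Fin n)))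
    (𝔅 : Set (Set (EuclideanSpace ℝ (Fin n)))) (p : ℝ) : Prop :=
  ∃ C : ℝ≥0∞, C ≠ ⊤ ∧ ∀ f : EuclideanSpace ℝ (Fin n) → ℝ, Measurable f →
    ∫⁻ x, maxOp μ 𝔅 f x ^ p ∂ν ≤ C * ∫⁻ x, ENNReal.ofReal |f x| ^ p ∂ν

/-- The Tauberian condition for `M_{𝔅,μ}` at level `γ`, with constant `c`, with respect
to the measure `ν`. -/
def TauberianCond {n : ℕ} (μ ν : Measure (EuclideanSpace ℝ (Fin n)))
    (𝔅 : Set (Set (EuclideanSpace ℝ (Fin n)))) (γ c : ℝ) : Prop :=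
  ∀ E : Set (EuclideanSpace ℝ (Fin n)), MeasurableSet E →
    ν {x | ENNReal.ofReal γ < maxOp μ 𝔅 (E.indicator 1) x} ≤ ENNReal.ofReal c * ν E

/-- The standard open dyadic box of scale `2^k` and position `m` in `ℝⁿ`. -/
def stdBox (n : ℕ) (k : ℤ) (m : Fin n → ℤ) : Set (Fin n → ℝ) :=
  {x | ∀ i, (m i : ℝ) * 2 ^ k < x i ∧ x i < ((m i : ℝ) + 1) * 2 ^ k}

/-- A parametrization of a rectangular grid: a rigid motion composed with a positive
diagonal scaling. The image of the standard unit box under such a map is a rectangle. -/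
def IsRectParam {n : ℕ} (T : (Fin n → ℝ) → EuclideanSpace ℝ (Fin n)) : Prop :=
  ∃ (f : EuclideanSpace ℝ (Fin n) ≃ᵢ EuclideanSpace ℝ (Fin n)) (l : Fin n → ℝ),
    (∀ i, 0 < l i) ∧
    ∀ x, T x = f ((WithLp.equiv 2 (Fin n → ℝ)).symm (fun i => l i * x i))

/-- The dyadic mesh generated by a rectangle parametrized by `T`. -/
def dyadicMesh {n : ℕ} (T : (Fin n → ℝ) → EuclideanSpace ℝ (Fin n)) :
    Set (Set (EuclideanSpace ℝ (Fin n))) :=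
  {S | ∃ (k : ℤ) (m : Fin n → ℤ), S = T '' stdBox n k m}

/-- `S` is a dyadic descendant of the rectangle `R`, `s` generations inside `R`. -/
def DyadicDescendant {n : ℕ} (R S : Set (EuclideanSpace ℝ (Fin n))) (s : ℕ) : Prop :=
  ∃ T : (Fin n → ℝ) → EuclideanSpace ℝ (Fin n), IsRectParam T ∧
    T '' stdBox n 0 0 = R ∧
    ∃ m : Fin n → ℤ, (∀ i, 0 ≤ m i ∧ m i < 2 ^ s) ∧ S = T '' stdBox n (-(s : ℤ)) m

/-- The family of all homothetic copies (translates and positive dilates) of `R₀`. -/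
def homCopies {n : ℕ} (R₀ : Set (EuclideanSpace ℝ (Fin n))) :
    Set (Set (EuclideanSpace ℝ (Fin n))) :=
  {S | ∃ (y : EuclideanSpace ℝ (Fin n)) (s : ℝ), 0 < s ∧ S = y +ᵥ s • R₀}

/-- Iterated halo sets `H_β^k(E)`: `H_β^0(E) = E` and
`H_β^{k+1}(E) = {x : M_{𝔊,μ}(1_{H_β^k(E)})(x) ≥ β}`. -/
def Hiter {n : ℕ} (μ : Measure (EuclideanSpace ℝ (Fin n)))
    (𝔊 : Set (Set (EuclideanSpace ℝ (Fin n)))) (β : ℝ)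
    (E : Set (EuclideanSpace ℝ (Fin n))) : ℕ → Set (EuclideanSpace ℝ (Fin n))
  | 0 => E
  | k + 1 => {x | ENNReal.ofReal β ≤ maxOp μ 𝔊 ((Hiter μ 𝔊 β E k).indicator 1) x}

/-- The Muckenhoupt `A_{p,𝔅}` condition for a weight `w` (with respect to Lebesgue
measure); here `1 - p/(p-1) = 1 - p'`. -/
def MuckenhouptAp {n : ℕ} (𝔅 : Set (Set (EuclideanSpace ℝ (Fin n))))
    (w : EuclideanSpace ℝ (Fin n) → ℝ) (p : ℝ) : Prop :=
  ∃ C : ℝ≥0∞, C ≠ ⊤ ∧ ∀ B ∈ 𝔅,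
    ((∫⁻ x in B, ENNReal.ofReal (w x) ∂volume) / volume B) *
      (((∫⁻ x in B, ENNReal.ofReal (w x) ^ (1 - p / (p - 1)) ∂volume) / volume B) ^ (p - 1))
      ≤ C

/-- `𝔅` is a Muckenhoupt basis: for every `1 < p < ∞` and every weight `w ∈ A_{p,𝔅}`,
the maximal operator `M_𝔅` is bounded on `L^p(w)`. -/
def MuckenhouptBasis {n : ℕ} (𝔅 : Set (Set (EuclideanSpace ℝ (Fin n)))) : Prop :=
  ∀ p : ℝ, 1 < p → ∀ w : EuclideanSpace ℝ (Fin n) → ℝ, (∀ x, 0 ≤ w x) →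
    LocallyIntegrable w volume → MuckenhouptAp 𝔅 w p →
    BoundedOnLp volume (volume.withDensity fun x => ENNReal.ofReal (w x)) 𝔅 p

end

section helpers

variable {n : ℕ}

lemma mem_hom (C : Set (EuclideanSpace ℝ (Fin n))) (a x : EuclideanSpace ℝ (Fin n)) {t : ℝ}
    (ht : 0 < t) : x ∈ a +ᵥ t • C ↔ t⁻¹ • (x - a) ∈ C := by
  rw [Set.mem_vadd_set_iff_neg_vadd_mem, Set.mem_smul_set_iff_inv_smul_mem₀ ht.ne']
  simp [sub_eq_neg_add]

lemma smul_hom (C : Set (EuclideanSpace ℝ (Fin n))) (a : EuclideanSpace ℝ (Fin n)) {s t : ℝ}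
    (hs : 0 < s) (ht : 0 < t) : s • (a +ᵥ t • C) = (s • a) +ᵥ (s * t) • C := by
  ext x
  rw [mem_hom _ _ _ (mul_pos hs ht), Set.mem_smul_set_iff_inv_smul_mem₀ hs.ne', mem_hom _ _ _ ht]
  have : t⁻¹ • (s⁻¹ • x - a) = (s * t)⁻¹ • (x - s • a) := by
    rw [mul_inv, mul_comm, mul_smul, smul_sub s⁻¹, smul_smul s⁻¹ s, inv_mul_cancel₀ hs.ne', one_smul]
  rw [this]

/-- Asymmetry bound for convex sets (via Helly). -/
lemma exists_center (B : Set (EuclideanSpace ℝ (Fin n))) (hB : IsConvexBasisSet B) :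
    ∃ p ∈ B, ∀ x ∈ B, ∀ y ∈ B, ∃ z ∈ B, x - y = ((n : ℝ) + 1) • (z - p) := by
  obtain ⟨⟨b₀, hb₀⟩, hbd, hop, hcv⟩ := hB
  set N : ℝ := (n : ℝ) + 1 with hN
  have hNpos : 0 < N := by positivity
  let F : closure B → Set (EuclideanSpace ℝ (Fin n)) := fun x =>
    (fun y => N⁻¹ • (x : EuclideanSpace ℝ (Fin n)) + (n * N⁻¹) • y) '' closure B
  have hcl : Convex ℝ (closure B) := hcv.closure
  have hcomp : IsCompact (closure B) := hbd.isCompact_closure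
  have hF : (⋂ i, F i).Nonempty := by
    apply Convex.helly_theorem_compact' (𝕜 := ℝ)
    · intro i
      have := (hcl.smul ((n : ℝ) * N⁻¹)).vadd (N⁻¹ • (i : EuclideanSpace ℝ (Fin n)))
      have he : F i = N⁻¹ • (i : EuclideanSpace ℝ (Fin n)) +ᵥ ((n : ℝ) * N⁻¹) • closure B := by
        ext x
        simp [F, Set.mem_vadd_set, Set.mem_smul_set]
      rw [he]
      exact this
    · intro i
      exact hcomp.image (by fun_prop)
    · intro I hI
      rw [finrank_euclideanSpace_fin] at hI
      have hb₀' : b₀ ∈ closure B := subset_closure hb₀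
      let r : ℝ := N - (I.card : ℝ)
      have hr : 0 ≤ r := by
        have : (I.card : ℝ) ≤ ((n + 1 : ℕ) : ℝ) := by exact_mod_cast hI
        simp only [r, hN]; push_cast at this; linarith
      refine ⟨N⁻¹ • ((∑ i ∈ I, (i : EuclideanSpace ℝ (Fin n))) + r • b₀), ?_⟩
      simp only [Set.mem_iInter]
      intro i hi
      classical
      rcases Nat.eq_zero_or_pos n with hn | hn
      · subst hn
        exact ⟨b₀, hb₀', Subsingleton.elim _ _⟩
      have hn' : (0 : ℝ) < n := by exact_mod_cast hn
      refine ⟨(n : ℝ)⁻¹ • ((∑ j ∈ I.erase i, (j : EuclideanSpace ℝ (Fin n))) + r • b₀), ?_, ?_⟩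
      · have hcard : ((I.erase i).card : ℝ) + r = n := by
          rw [Finset.card_erase_of_mem hi, Nat.cast_sub (Finset.card_pos.2 ⟨i, hi⟩)]
          simp only [r, hN]; push_cast; ring
        have hmem := hcl.sum_mem (t := Finset.insertNone (I.erase i))
          (w := fun o : Option (closure B) => (n : ℝ)⁻¹ * (o.elim r (fun _ => 1)))
          (z := fun o : Option (closure B) => o.elim b₀ (fun j => (j : EuclideanSpace ℝ (Fin n)))) ?_ ?_ ?_
        · convert hmem using 1
          rw [Finset.sum_insertNone]
          simp [Finset.smul_sum, smul_add, mul_smul, add_comm]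
        · rintro (_ | j) _
          · simp only [Option.elim]; positivity
          · simp only [Option.elim]; positivity
        · rw [Finset.sum_insertNone]
          simp only [Option.elim, mul_one, Finset.sum_const, nsmul_eq_mul]
          rw [← hcard] at hn' ⊢
          field_simp
          ring
        · rintro (_ | j) _
          · exact hb₀'
          · exact j.2
      · simp only
        rw [← Finset.add_sum_erase I _ hi, smul_smul]
        have : (n : ℝ) * N⁻¹ * (n : ℝ)⁻¹ = N⁻¹ := by field_simp
        rw [this]
        module
  obtain ⟨p, hp⟩ := hF
  simp only [Set.mem_iInter] at hp
  have hpB : p ∈ B := by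
    obtain ⟨y, hy, hyp⟩ := hp ⟨b₀, subset_closure hb₀⟩
    have := hcv.combo_interior_closure_mem_interior (x := b₀) (y := y) (a := N⁻¹) (b := n * N⁻¹)
      (by rwa [hop.interior_eq]) hy (by positivity) (by positivity) (by field_simp; rw [hN]; ring)
    rw [hop.interior_eq] at this
    simpa [← hyp] using this
  refine ⟨p, hpB, fun x hx y hy => ?_⟩
  obtain ⟨w, hw, hwp⟩ := hp ⟨y, subset_closure hy⟩
  refine ⟨N⁻¹ • x + (n * N⁻¹) • w, ?_, ?_⟩
  · have := hcv.combo_interior_closure_mem_interior (x := x) (y := w) (a := N⁻¹) (b := n * N⁻¹)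
      (by rwa [hop.interior_eq]) hw (by positivity) (by positivity) (by field_simp; rw [hN]; ring)
    rwa [hop.interior_eq] at this
  · simp only at hwp
    rw [← hwp]
    rw [add_sub_add_right_eq_sub, ← smul_sub, smul_smul, mul_inv_cancel₀ hNpos.ne', one_smul]

end helpers

section helpers2

variable {n : ℕ}

lemma hom_mem' {𝔅 : Set (Set (EuclideanSpace ℝ (Fin n)))} (hhom : HomothecyInvariant 𝔅)
    {C : Set (EuclideanSpace ℝ (Fin n))} (hC : C ∈ 𝔅) (a : EuclideanSpace ℝ (Fin n)) {t : ℝ}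
    (ht : 0 < t) : a +ᵥ t • C ∈ 𝔅 :=
  (hhom _ ((hhom C hC).2 t ht)).1 a

lemma hom_mono {C : Set (EuclideanSpace ℝ (Fin n))} (hcv : Convex ℝ C) (h0 : 0 ∈ C)
    (a : EuclideanSpace ℝ (Fin n)) {s t : ℝ} (hs : 0 < s) (hst : s ≤ t) :
    a +ᵥ s • C ⊆ a +ᵥ t • C := by
  intro x hx
  have ht : 0 < t := hs.trans_le hst
  rw [mem_hom _ _ _ hs] at hx
  rw [mem_hom _ _ _ ht]
  have := hcv.smul_mem_of_zero_mem h0 hx (t := t⁻¹ * s)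
    ⟨by positivity, by rw [inv_mul_le_iff₀ ht]; simpa using hst⟩
  rwa [smul_smul, mul_assoc, mul_inv_cancel₀ hs.ne', mul_one] at this

lemma center_dbl {𝔅 : Set (Set (EuclideanSpace ℝ (Fin n)))}
    (hB : ∀ B ∈ 𝔅, IsConvexBasisSet B) (hhom : HomothecyInvariant 𝔅)
    {μ : Measure (EuclideanSpace ℝ (Fin n))} {Δ : ℝ} (hdbl : DoublingWrt μ 𝔅 Δ)
    {C : Set (EuclideanSpace ℝ (Fin n))} (hC : C ∈ 𝔅) (h0 : 0 ∈ C)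
    (a : EuclideanSpace ℝ (Fin n)) {t : ℝ} (ht : 0 < t) (m : ℕ) :
    μ (a +ᵥ (2 ^ m * t) • C) ≤ ENNReal.ofReal Δ ^ m * μ (a +ᵥ t • C) := by
  induction m with
  | zero => simp
  | succ m ih =>
    have hpos : 0 < 2 ^ m * t := by positivity
    have heq : (-a) +ᵥ (2 : ℝ) • (a +ᵥ (2 ^ m * t) • C) = a +ᵥ (2 ^ (m + 1) * t) • C := by
      rw [smul_hom _ _ two_pos hpos, vadd_vadd]
      congr 1
      · module
      · congr 1; ring
    have h := hdbl _ (hom_mem' hhom hC a hpos) (-a)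
    rw [heq] at h
    have h' := h (hom_mono (hB C hC).2.2.2 h0 a hpos (by rw [pow_succ]; nlinarith))
    calc _ ≤ _ := h'
      _ ≤ ENNReal.ofReal Δ * (ENNReal.ofReal Δ ^ m * μ (a +ᵥ t • C)) := by gcongr
      _ = _ := by rw [pow_succ]; ring

lemma exists_normalized {𝔅 : Set (Set (EuclideanSpace ℝ (Fin n)))}
    (hB : ∀ B ∈ 𝔅, IsConvexBasisSet B) (hhom : HomothecyInvariant 𝔅)
    {B : Set (EuclideanSpace ℝ (Fin n))} (hBm : B ∈ 𝔅) :
    ∃ p : EuclideanSpace ℝ (Fin n), ∃ C ∈ 𝔅, B = p +ᵥ C ∧ 0 ∈ C ∧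
      ∀ x ∈ C, ∀ y ∈ C, ∃ z ∈ C, x - y = ((n : ℝ) + 1) • z := by
  obtain ⟨p, hp, h⟩ := exists_center B (hB B hBm)
  refine ⟨p, (-p) +ᵥ B, (hhom B hBm).1 _, by simp, ?_, ?_⟩
  · rw [Set.mem_vadd_set_iff_neg_vadd_mem]; simpa using hp
  · intro x hx y hy
    rw [Set.mem_vadd_set_iff_neg_vadd_mem] at hx hy
    obtain ⟨z, hz, hxy⟩ := h _ hx _ hy
    refine ⟨z - p, ?_, ?_⟩
    · rw [Set.mem_vadd_set_iff_neg_vadd_mem]; simpa using hz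
    · rw [← hxy]; simp

lemma ball_sub_hom {C : Set (EuclideanSpace ℝ (Fin n))} (hC : IsConvexBasisSet C) (h0 : 0 ∈ C)
    (R : ℝ) : ∃ m : ℕ, ∀ (a : EuclideanSpace ℝ (Fin n)) (t : ℝ), 0 < t →
      Metric.closedBall a (R * t) ⊆ a +ᵥ (2 ^ m * t) • C := by
  obtain ⟨r, hr, hrC⟩ := Metric.isOpen_iff.1 hC.2.2.1 0 h0
  obtain ⟨m, hm⟩ := pow_unbounded_of_one_lt (R / r) (one_lt_two (α := ℝ))
  refine ⟨m, fun a t ht x hx => ?_⟩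
  have hpos : 0 < 2 ^ m * t := by positivity
  rw [mem_hom _ _ _ hpos]
  apply hrC
  rw [mem_ball_zero_iff, norm_smul, norm_inv, Real.norm_of_nonneg hpos.le,
    inv_mul_lt_iff₀ hpos]
  rw [mem_closedBall_iff_norm] at hx
  rw [div_lt_iff₀ hr] at hm
  nlinarith

lemma pos_measure {𝔅 : Set (Set (EuclideanSpace ℝ (Fin n)))}
    (hB : ∀ B ∈ 𝔅, IsConvexBasisSet B) (hhom : HomothecyInvariant 𝔅)
    {μ : Measure (EuclideanSpace ℝ (Fin n))} (hμ : μ ≠ 0) {Δ : ℝ} (hdbl : DoublingWrt μ 𝔅 Δ)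
    {B : Set (EuclideanSpace ℝ (Fin n))} (hBm : B ∈ 𝔅) : 0 < μ B := by
  obtain ⟨p, C, hC, rfl, h0, -⟩ := exists_normalized hB hhom hBm
  rw [pos_iff_ne_zero]
  intro hz
  apply hμ
  rw [← Measure.measure_univ_eq_zero, ← Metric.iUnion_closedBall_nat p, measure_iUnion_null_iff]
  intro k
  obtain ⟨m, hm⟩ := ball_sub_hom (hB C hC) h0 k
  have h1 := hm p 1 one_pos
  have h2 := center_dbl hB hhom hdbl hC h0 p one_pos m
  rw [one_smul, hz, mul_zero] at h2
  rw [mul_one] at h1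
  exact le_antisymm ((measure_mono h1).trans h2) (zero_le)

lemma compare {𝔅 : Set (Set (EuclideanSpace ℝ (Fin n)))}
    (hB : ∀ B ∈ 𝔅, IsConvexBasisSet B) (hhom : HomothecyInvariant 𝔅)
    {μ : Measure (EuclideanSpace ℝ (Fin n))} {Δ : ℝ} (hdbl : DoublingWrt μ 𝔅 Δ)
    {C : Set (EuclideanSpace ℝ (Fin n))} (hC : C ∈ 𝔅) (h0 : 0 ∈ C) (R : ℝ) :
    ∃ K : NNReal, ∀ (x a : EuclideanSpace ℝ (Fin n)) (t : ℝ), 0 < t → dist x a ≤ R * t →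
      μ (Metric.closedBall x (R * t)) ≤ K * μ (a +ᵥ t • C) := by
  obtain ⟨m, hm⟩ := ball_sub_hom (hB C hC) h0 (2 * R)
  refine ⟨(Real.toNNReal Δ) ^ m, fun x a t ht hd => ?_⟩
  have h1 : Metric.closedBall x (R * t) ⊆ Metric.closedBall a (2 * R * t) :=
    Metric.closedBall_subset_closedBall' (by linarith)
  have := (measure_mono (h1.trans (hm a t ht))).trans (center_dbl hB hhom hdbl hC h0 a ht m)
  rw [ENNReal.coe_pow]
  exact this

lemma unifDoubling {𝔅 : Set (Set (EuclideanSpace ℝ (Fin n)))}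
    (hB : ∀ B ∈ 𝔅, IsConvexBasisSet B) (hhom : HomothecyInvariant 𝔅)
    {μ : Measure (EuclideanSpace ℝ (Fin n))} {Δ : ℝ} (hdbl : DoublingWrt μ 𝔅 Δ)
    {C : Set (EuclideanSpace ℝ (Fin n))} (hC : C ∈ 𝔅) (h0 : 0 ∈ C) :
    IsUnifLocDoublingMeasure μ := by
  obtain ⟨R, hR, hCR⟩ := (hB C hC).2.1.subset_closedBall_lt 0 0
  obtain ⟨K, hK⟩ := compare hB hhom hdbl hC h0 (2 * R)
  refine ⟨⟨K, ?_⟩⟩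
  filter_upwards [self_mem_nhdsWithin] with ε hε x
  have hε : 0 < ε := hε
  have h := hK x x (ε / R) (by positivity) (by rw [dist_self]; positivity)
  have he : 2 * R * (ε / R) = 2 * ε := by field_simp
  rw [he] at h
  refine h.trans ?_
  gcongr
  intro y hy
  rw [mem_hom _ _ _ (by positivity)] at hy
  have := hCR hy
  rw [mem_closedBall_zero_iff, norm_smul, norm_inv, Real.norm_of_nonneg (by positivity),
    inv_mul_le_iff₀ (by positivity), div_mul_cancel₀ _ hR.ne'] at this
  rwa [mem_closedBall_iff_norm]

lemma density_pt (μ : Measure (EuclideanSpace ℝ (Fin n))) [IsLocallyFiniteMeasure μ]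
    [IsUnifLocDoublingMeasure μ] {S : Set (EuclideanSpace ℝ (Fin n))} (hS : MeasurableSet S) :
    ∀ᵐ z ∂(μ.restrict S), ∀ η : ℝ, 0 < η → ∀ᶠ r in 𝓝[>] (0 : ℝ),
      μ.real (Metric.closedBall z r \ S) ≤ η * μ.real (Metric.closedBall z r) := by
  filter_upwards [IsUnifLocDoublingMeasure.ae_tendsto_measure_inter_div μ S 1] with z hz η hη
  have h := hz (l := 𝓝[>] (0 : ℝ)) (fun _ => z) id tendsto_id (by
    filter_upwards [self_mem_nhdsWithin] with r hr
    have hr : 0 < r := hr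
    simpa using hr.le)
  have h' := (ENNReal.tendsto_toReal ENNReal.one_ne_top).comp h
  have h'' := h'.eventually (lt_mem_nhds (show 1 - η < (1 : ℝ≥0∞).toReal by simpa using hη))
  filter_upwards [h''] with r hr
  have hfin : μ (Metric.closedBall z r) ≠ ⊤ := Metric.isBounded_closedBall.measure_lt_top.ne
  have hsplit := measureReal_inter_add_sdiff (μ := μ) (s := Metric.closedBall z r) hS hfin
  simp only [Function.comp, id, ENNReal.toReal_div] at hr
  change 1 - η < μ.real (S ∩ Metric.closedBall z r) / μ.real (Metric.closedBall z r) at hr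
  rw [inter_comm] at hr
  rcases (measureReal_nonneg (μ := μ) (s := Metric.closedBall z r)).eq_or_lt with h0 | h0
  · have := measureReal_nonneg (μ := μ) (s := Metric.closedBall z r ∩ S)
    rw [← h0] at hsplit ⊢
    linarith
  · rw [lt_div_iff₀ h0] at hr
    nlinarith

end helpers2

section helpers3

variable {n : ℕ}

lemma hom_shift (C : Set (EuclideanSpace ℝ (Fin n))) (a p : EuclideanSpace ℝ (Fin n)) {t : ℝ}
    (ht : 0 < t) : a +ᵥ t • (p +ᵥ C) = (a + t • p) +ᵥ t • C := by
  ext x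
  rw [mem_hom _ _ _ ht, mem_hom _ _ _ ht, Set.mem_vadd_set_iff_neg_vadd_mem]
  have : -p +ᵥ t⁻¹ • (x - a) = t⁻¹ • (x - (a + t • p)) := by
    rw [vadd_eq_add, ← sub_sub, smul_sub t⁻¹ (x - a), smul_smul, inv_mul_cancel₀ ht.ne', one_smul]
    abel
  rw [this]

lemma real_fin (μ : Measure (EuclideanSpace ℝ (Fin n))) [IsLocallyFiniteMeasure μ]
    {B : Set (EuclideanSpace ℝ (Fin n))} (hB : IsConvexBasisSet B) : μ B ≠ ⊤ :=
  hB.2.1.measure_lt_top.ne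

lemma dens_hom {𝔅 : Set (Set (EuclideanSpace ℝ (Fin n)))}
    (hB : ∀ B ∈ 𝔅, IsConvexBasisSet B) (hhom : HomothecyInvariant 𝔅)
    {μ : Measure (EuclideanSpace ℝ (Fin n))} [IsLocallyFiniteMeasure μ]
    {Δ : ℝ} (hdbl : DoublingWrt μ 𝔅 Δ)
    {B : Set (EuclideanSpace ℝ (Fin n))} (hBm : B ∈ 𝔅) {S : Set (EuclideanSpace ℝ (Fin n))}
    {z : EuclideanSpace ℝ (Fin n)}
    (hz : ∀ η : ℝ, 0 < η → ∀ᶠ r in 𝓝[>] (0 : ℝ),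
      μ.real (Metric.closedBall z r \ S) ≤ η * μ.real (Metric.closedBall z r))
    {R : ℝ} (hR : 0 < R) {η : ℝ} (hη : 0 < η) :
    ∀ᶠ t in 𝓝[>] (0 : ℝ), ∀ a : EuclideanSpace ℝ (Fin n), a +ᵥ t • B ⊆ Metric.closedBall z (R * t) →
      μ.real ((a +ᵥ t • B) \ S) ≤ η * μ.real (a +ᵥ t • B) := by
  obtain ⟨p, C, hC, rfl, h0, -⟩ := exists_normalized hB hhom hBm
  obtain ⟨K, hK⟩ := compare hB hhom hdbl hC h0 R
  have hlim : Tendsto (fun t : ℝ => R * t) (𝓝[>] 0) (𝓝[>] 0) := by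
    apply tendsto_nhdsWithin_of_tendsto_nhds_of_eventually_within
    · have : Tendsto (fun t : ℝ => R * t) (𝓝 0) (𝓝 (R * 0)) :=
        (continuous_const.mul continuous_id).tendsto 0
      rw [mul_zero] at this
      exact this.mono_left nhdsWithin_le_nhds
    · filter_upwards [self_mem_nhdsWithin] with t ht
      exact mul_pos hR ht
  have hev := hlim.eventually (hz (η / (K + 1)) (by positivity))
  filter_upwards [hev, self_mem_nhdsWithin] with t ht htpos a ha
  have htpos : 0 < t := htpos
  rw [hom_shift _ _ _ htpos] at ha ⊢
  set b := a + t • p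
  have hbm : b ∈ b +ᵥ t • C := by
    rw [mem_hom _ _ _ htpos]; simpa using h0
  have hd : dist z b ≤ R * t := by
    have := ha hbm
    rw [Metric.mem_closedBall] at this
    rwa [dist_comm]
  have h1 := hK z b t htpos hd
  have hfin : μ (b +ᵥ t • C) ≠ ⊤ := real_fin μ (hB _ (hom_mem' hhom hC b htpos))
  have h2 : μ.real (Metric.closedBall z (R * t)) ≤ K * μ.real (b +ᵥ t • C) := by
    have := ENNReal.toReal_mono (ENNReal.mul_ne_top ENNReal.coe_ne_top hfin) h1
    rwa [ENNReal.toReal_mul] at this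
  have h3 : μ.real ((b +ᵥ t • C) \ S) ≤ μ.real (Metric.closedBall z (R * t) \ S) := by
    exact measureReal_mono (by gcongr)
      (Metric.isBounded_closedBall.subset sdiff_subset).measure_lt_top.ne
  have h4 : 0 ≤ μ.real (b +ᵥ t • C) := measureReal_nonneg
  calc _ ≤ _ := h3
    _ ≤ _ := ht
    _ ≤ η / (K + 1) * (K * μ.real (b +ᵥ t • C)) := by gcongr
    _ = η * μ.real (b +ᵥ t • C) * (K / (K + 1)) := by field_simp
    _ ≤ η * μ.real (b +ᵥ t • C) * 1 := by
      gcongr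
      rw [div_le_one (by positivity)]; linarith
    _ = _ := mul_one _

lemma mem_Q (B : Set (EuclideanSpace ℝ (Fin n))) (z x : EuclideanSpace ℝ (Fin n)) {t : ℝ}
    (ht : 0 < t) : x ∈ ((1 - t) • z) +ᵥ t • B ↔ z + t⁻¹ • (x - z) ∈ B := by
  rw [mem_hom _ _ _ ht]
  have : t⁻¹ • (x - (1 - t) • z) = z + t⁻¹ • (x - z) := by
    have h : x - (1 - t) • z = t • z + (x - z) := by module
    rw [h, smul_add, smul_smul, inv_mul_cancel₀ ht.ne', one_smul]
  rw [this]

lemma Q_sub {B : Set (EuclideanSpace ℝ (Fin n))} (hB : IsConvexBasisSet B)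
    {z : EuclideanSpace ℝ (Fin n)} (hz : z ∈ closure B) {t : ℝ} (ht : 0 < t) (ht1 : t ≤ 1) :
    ((1 - t) • z) +ᵥ t • B ⊆ B := by
  intro x hx
  rw [mem_Q _ _ _ ht] at hx
  have := hB.2.2.2.combo_closure_interior_mem_interior (x := z) (y := z + t⁻¹ • (x - z)) hz
    (by rwa [hB.2.2.1.interior_eq]) (a := 1 - t) (b := t) (by linarith) ht (by ring)
  rw [hB.2.2.1.interior_eq, smul_add, smul_smul, mul_inv_cancel₀ ht.ne'] at this
  convert this using 1
  module

lemma Q_ball {B : Set (EuclideanSpace ℝ (Fin n))} {z : EuclideanSpace ℝ (Fin n)} {R : ℝ}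
    (hR : B ⊆ Metric.closedBall z R) {t : ℝ} (ht : 0 < t) :
    ((1 - t) • z) +ᵥ t • B ⊆ Metric.closedBall z (R * t) := by
  intro x hx
  rw [mem_Q _ _ _ ht] at hx
  have := hR hx
  rw [mem_closedBall_iff_norm, add_sub_cancel_left, norm_smul, norm_inv,
    Real.norm_of_nonneg ht.le, inv_mul_le_iff₀ ht] at this
  rw [mem_closedBall_iff_norm]
  linarith

lemma frontier_null {𝔅 : Set (Set (EuclideanSpace ℝ (Fin n)))}
    (hB : ∀ B ∈ 𝔅, IsConvexBasisSet B) (hhom : HomothecyInvariant 𝔅)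
    {μ : Measure (EuclideanSpace ℝ (Fin n))} [IsLocallyFiniteMeasure μ]
    [IsUnifLocDoublingMeasure μ] (hμ : μ ≠ 0)
    {Δ : ℝ} (hdbl : DoublingWrt μ 𝔅 Δ)
    {B : Set (EuclideanSpace ℝ (Fin n))} (hBm : B ∈ 𝔅) : μ (frontier B) = 0 := by
  have hfm : MeasurableSet (frontier B) := isClosed_frontier.measurableSet
  rw [← Measure.restrict_eq_zero, ← ae_eq_bot, ← eventually_false_iff_eq_bot]
  filter_upwards [density_pt μ hfm, ae_restrict_mem hfm] with z hz hzf
  obtain ⟨R, hR, hBR⟩ := (hB B hBm).2.1.subset_closedBall_lt 0 z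
  have h := dens_hom hB hhom hdbl hBm hz hR (η := 1 / 2) (by norm_num)
  have h1 : ∀ᶠ t in 𝓝[>] (0 : ℝ), t < 1 := nhdsWithin_le_nhds (gt_mem_nhds one_pos)
  obtain ⟨t, ht, ht1, htpos⟩ := (h.and (h1.and self_mem_nhdsWithin)).exists
  have htpos : 0 < t := htpos
  have h2 := ht _ (Q_ball hBR htpos)
  have hQ := hom_mem' hhom hBm ((1 - t) • z) htpos
  have h3 := pos_measure hB hhom hμ hdbl hQ
  have hdis : (((1 - t) • z) +ᵥ t • B) \ frontier B = ((1 - t) • z) +ᵥ t • B := by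
    apply sdiff_eq_left.2
    apply Disjoint.mono_left (Q_sub (hB B hBm) (frontier_subset_closure hzf) htpos ht1.le)
    have := disjoint_interior_frontier (s := B)
    rwa [(hB B hBm).2.2.1.interior_eq] at this
  rw [hdis] at h2
  have h4 := ENNReal.toReal_pos h3.ne' (real_fin μ (hB _ hQ))
  change 0 < μ.real _ at h4
  linarith

lemma cont_Q {𝔅 : Set (Set (EuclideanSpace ℝ (Fin n)))}
    (hB : ∀ B ∈ 𝔅, IsConvexBasisSet B) (hhom : HomothecyInvariant 𝔅)
    {μ : Measure (EuclideanSpace ℝ (Fin n))} [IsLocallyFiniteMeasure μ]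
    [IsUnifLocDoublingMeasure μ] (hμ : μ ≠ 0)
    {Δ : ℝ} (hdbl : DoublingWrt μ 𝔅 Δ)
    {B : Set (EuclideanSpace ℝ (Fin n))} (hBm : B ∈ 𝔅) {S : Set (EuclideanSpace ℝ (Fin n))}
    (hS : MeasurableSet S)
    {z : EuclideanSpace ℝ (Fin n)} (hz : z ∈ B) {t₁ : ℝ} (ht₁ : 0 < t₁) :
    ContinuousOn (fun t : ℝ => μ.real ((((1 - t) • z) +ᵥ t • B) ∩ S)) (Icc t₁ 1) := by
  let A : ℝ → Set (EuclideanSpace ℝ (Fin n)) := fun t => {x | z + t⁻¹ • (x - z) ∈ B}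
  have hAQ : ∀ t, 0 < t → ((1 - t) • z) +ᵥ t • B = A t := fun t ht => by
    ext x; exact mem_Q _ _ _ ht
  have hBop : IsOpen B := (hB B hBm).2.2.1
  have hAop : ∀ t, IsOpen (A t) := fun t =>
    hBop.preimage (f := fun x => z + t⁻¹ • (x - z)) (by fun_prop)
  have hcong : EqOn (fun t : ℝ => μ.real ((((1 - t) • z) +ᵥ t • B) ∩ S))
      (fun t => μ.real (A t ∩ S)) (Icc t₁ 1) := fun t ht => by
    simp only [hAQ t (ht₁.trans_le ht.1)]
  refine ContinuousOn.congr ?_ hcong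
  intro t₀ ht₀
  have hp : 0 < t₀ := ht₁.trans_le ht₀.1
  have hAm := hom_mem' hhom hBm ((1 - t₀) • z) hp
  have hfr := frontier_null hB hhom hμ hdbl hAm
  rw [hAQ t₀ hp] at hAm hfr
  have hfin : μ (A t₀ ∩ S) ≠ ⊤ :=
    measure_ne_top_of_subset inter_subset_left (real_fin μ (hB _ hAm))
  refine (ENNReal.tendsto_toReal hfin).comp ?_
  refine tendsto_measure_of_ae_tendsto_indicator _ ((hAop t₀).measurableSet.inter hS)
    (fun t => (hAop t).measurableSet.inter hS) hBop.measurableSet (real_fin μ (hB B hBm)) ?_ ?_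
  · filter_upwards [self_mem_nhdsWithin] with t ht
    have htp := ht₁.trans_le ht.1
    refine inter_subset_left.trans ?_
    rw [← hAQ t htp]
    exact Q_sub (hB B hBm) (subset_closure hz) htp ht.2
  · have hae : ∀ᵐ x ∂μ, x ∉ frontier (A t₀) := measure_eq_zero_iff_ae_notMem.1 hfr
    filter_upwards [hae] with x hx
    have hcont : ContinuousAt (fun t : ℝ => z + t⁻¹ • (x - z)) t₀ := by
      have := continuousAt_inv₀ hp.ne'
      fun_prop
    apply nhdsWithin_le_nhds
    by_cases hxA : x ∈ A t₀
    · have h1 : ∀ᶠ t in 𝓝 t₀, z + t⁻¹ • (x - z) ∈ B := hcont.eventually (hBop.mem_nhds hxA)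
      filter_upwards [h1] with t ht
      have ht : x ∈ A t := ht
      simp [ht, hxA]
    · have hxc : z + t₀⁻¹ • (x - z) ∉ closure B := by
        intro hc
        apply hx
        rw [frontier, (hAop t₀).interior_eq]
        refine ⟨?_, hxA⟩
        let e : EuclideanSpace ℝ (Fin n) → EuclideanSpace ℝ (Fin n) := fun y => z + t₀ • (y - z)
        have he : Continuous e := by fun_prop
        have hmaps : MapsTo e B (A t₀) := by
          intro y hy
          change z + t₀⁻¹ • (z + t₀ • (y - z) - z) ∈ B
          rw [add_sub_cancel_left, smul_smul, inv_mul_cancel₀ hp.ne', one_smul]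
          simpa using hy
        have := hmaps.closure he hc
        simpa [e, smul_smul, mul_inv_cancel₀ hp.ne'] using this
      have h1 : ∀ᶠ t in 𝓝 t₀, z + t⁻¹ • (x - z) ∈ (closure B)ᶜ :=
        hcont.eventually (isClosed_closure.isOpen_compl.mem_nhds hxc)
      filter_upwards [h1] with t ht
      have ht : x ∉ A t := fun h => ht (subset_closure h)
      simp [ht, hxA]

lemma select_Q {𝔅 : Set (Set (EuclideanSpace ℝ (Fin n)))}
    (hB : ∀ B ∈ 𝔅, IsConvexBasisSet B) (hhom : HomothecyInvariant 𝔅)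
    {μ : Measure (EuclideanSpace ℝ (Fin n))} [IsLocallyFiniteMeasure μ]
    [IsUnifLocDoublingMeasure μ] (hμ : μ ≠ 0)
    {Δ : ℝ} (hdbl : DoublingWrt μ 𝔅 Δ)
    {B : Set (EuclideanSpace ℝ (Fin n))} (hBm : B ∈ 𝔅) {S : Set (EuclideanSpace ℝ (Fin n))}
    (hS : MeasurableSet S) (hBS : μ.real (B ∩ S) ≤ 1 / 2 * μ.real B)
    {z : EuclideanSpace ℝ (Fin n)} (hzB : z ∈ B)
    (hz : ∀ η : ℝ, 0 < η → ∀ᶠ r in 𝓝[>] (0 : ℝ),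
      μ.real (Metric.closedBall z r \ S) ≤ η * μ.real (Metric.closedBall z r)) :
    ∃ t : ℝ, 0 < t ∧ t ≤ 1 ∧ μ.real ((((1 - t) • z) +ᵥ t • B) ∩ S) =
      3 / 4 * μ.real (((1 - t) • z) +ᵥ t • B) := by
  obtain ⟨R, hR, hBR⟩ := (hB B hBm).2.1.subset_closedBall_lt 0 z
  have h := dens_hom hB hhom hdbl hBm hz hR (η := 1 / 4) (by norm_num)
  have h1 : ∀ᶠ t in 𝓝[>] (0 : ℝ), t < 1 := nhdsWithin_le_nhds (gt_mem_nhds one_pos)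
  obtain ⟨t₁, ht, ht1, htpos⟩ := (h.and (h1.and self_mem_nhdsWithin)).exists
  have htpos : 0 < t₁ := htpos
  have h2 := ht _ (Q_ball hBR htpos)
  have hc1 := cont_Q hB hhom hμ hdbl hBm hS hzB htpos
  have hc2 := cont_Q hB hhom hμ hdbl hBm MeasurableSet.univ hzB htpos
  simp only [inter_univ] at hc2
  have hc := hc1.sub (hc2.const_smul (3 / 4 : ℝ))
  have hiv := intermediate_value_Icc' ht1.le hc
  have hmem : (0 : ℝ) ∈ Icc (μ.real ((((1 - (1 : ℝ)) • z) +ᵥ (1 : ℝ) • B) ∩ S) -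
      (3 / 4 : ℝ) • μ.real (((1 - (1 : ℝ)) • z) +ᵥ (1 : ℝ) • B))
      (μ.real ((((1 - t₁) • z) +ᵥ t₁ • B) ∩ S) -
      (3 / 4 : ℝ) • μ.real (((1 - t₁) • z) +ᵥ t₁ • B)) := by
    constructor
    · have : (0 : ℝ) ≤ μ.real B := measureReal_nonneg
      simp only [sub_self, zero_smul, one_smul, zero_vadd, smul_eq_mul]
      linarith
    · have hsplit := measureReal_inter_add_sdiff (μ := μ) (s := ((1 - t₁) • z) +ᵥ t₁ • B) hS
        (real_fin μ (hB _ (hom_mem' hhom hBm _ htpos)))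
      rw [smul_eq_mul]
      linarith
  obtain ⟨t, ht, h0⟩ := hiv hmem
  refine ⟨t, htpos.trans_le ht.1, ht.2, ?_⟩
  have h0' := sub_eq_zero.1 h0
  exact h0'

end helpers3

section helpers4

variable {n : ℕ}

/-- The halo set at level `1/2`. -/
def haloSet (μ : Measure (EuclideanSpace ℝ (Fin n)))
    (𝔅 : Set (Set (EuclideanSpace ℝ (Fin n)))) (E : Set (EuclideanSpace ℝ (Fin n))) :
    Set (EuclideanSpace ℝ (Fin n)) :=
  {x | (1 / 2 : ℝ≥0∞) < maxOp μ 𝔅 (E.indicator 1) x}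

lemma lint_ind (μ : Measure (EuclideanSpace ℝ (Fin n)))
    {E : Set (EuclideanSpace ℝ (Fin n))} (hE : MeasurableSet E)
    {B : Set (EuclideanSpace ℝ (Fin n))} :
    (∫⁻ y in B, ENNReal.ofReal |E.indicator (1 : EuclideanSpace ℝ (Fin n) → ℝ) y| ∂μ) =
      μ (B ∩ E) := by
  have : ∀ y, ENNReal.ofReal |E.indicator (1 : EuclideanSpace ℝ (Fin n) → ℝ) y| =
      E.indicator (1 : EuclideanSpace ℝ (Fin n) → ℝ≥0∞) y := by
    intro y
    by_cases hy : y ∈ E <;> simp [hy]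
  simp_rw [this]
  rw [lintegral_indicator_one hE, Measure.restrict_apply hE, inter_comm]

lemma haloSet_mem {𝔅 : Set (Set (EuclideanSpace ℝ (Fin n)))}
    {μ : Measure (EuclideanSpace ℝ (Fin n))}
    {E : Set (EuclideanSpace ℝ (Fin n))} (hE : MeasurableSet E)
    {B : Set (EuclideanSpace ℝ (Fin n))} (hBm : B ∈ 𝔅) (hpos : 0 < μ B) (hfin : μ B ≠ ⊤)
    (h : 1 / 2 * μ.real B < μ.real (B ∩ E)) : B ⊆ haloSet μ 𝔅 E := by
  intro x hx
  change _ < maxOp μ 𝔅 (E.indicator 1) x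
  refine lt_of_lt_of_le ?_ (le_iSup_of_le B (le_iSup_of_le hBm (le_iSup_of_le hx
    (le_iSup_of_le hpos le_rfl))))
  rw [lint_ind μ hE, ENNReal.lt_div_iff_mul_lt (Or.inl hpos.ne') (Or.inl hfin)]
  have hfin' : μ (B ∩ E) ≠ ⊤ := measure_ne_top_of_subset inter_subset_left hfin
  rw [← ENNReal.toReal_lt_toReal (ENNReal.mul_ne_top (by simp) hfin) hfin', ENNReal.toReal_mul]
  simpa [Measure.real] using h

lemma haloSet_open {𝔅 : Set (Set (EuclideanSpace ℝ (Fin n)))}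
    (hB : ∀ B ∈ 𝔅, IsConvexBasisSet B)
    {μ : Measure (EuclideanSpace ℝ (Fin n))}
    (E : Set (EuclideanSpace ℝ (Fin n))) : IsOpen (haloSet μ 𝔅 E) := by
  rw [isOpen_iff_forall_mem_open]
  intro x hx
  have hx : _ < maxOp μ 𝔅 (E.indicator 1) x := hx
  simp only [maxOp, lt_iSup_iff] at hx
  obtain ⟨B, hBm, hxB, hpos, hlt⟩ := hx
  refine ⟨B, fun y hy => ?_, (hB B hBm).2.2.1, hxB⟩
  change _ < maxOp μ 𝔅 (E.indicator 1) y
  exact lt_of_lt_of_le hlt (le_iSup_of_le B (le_iSup_of_le hBm (le_iSup_of_le hy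
    (le_iSup_of_le hpos le_rfl))))

lemma engulf {C : Set (EuclideanSpace ℝ (Fin n))} (hcv : Convex ℝ C) (h0 : 0 ∈ C)
    (hd : ∀ x ∈ C, ∀ y ∈ C, ∃ z ∈ C, x - y = ((n : ℝ) + 1) • z)
    {m : ℕ} (hm : 1 + 2 * ((n : ℝ) + 1) ≤ 2 ^ m) {a a' : EuclideanSpace ℝ (Fin n)} {t t' : ℝ}
    (ht : 0 < t) (ht' : 0 < t') (htt : t' ≤ 2 * t)
    (hne : ((a' +ᵥ t' • C) ∩ (a +ᵥ t • C)).Nonempty) :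
    a' +ᵥ t' • C ⊆ a +ᵥ (2 ^ m * t) • C := by
  obtain ⟨w, hw', hw⟩ := hne
  intro x hx
  rw [mem_hom _ _ _ ht'] at hx hw'
  rw [mem_hom _ _ _ ht] at hw
  obtain ⟨z, hz, hxz⟩ := hd _ hx _ hw'
  have hs : 0 < t' * ((n : ℝ) + 1) := by positivity
  set s := t' * ((n : ℝ) + 1) with hsdef
  have hN : (0 : ℝ) < (n : ℝ) + 1 := by positivity
  have hts : t + s ≤ 2 ^ m * t := by
    have : s ≤ 2 * t * ((n : ℝ) + 1) := by rw [hsdef]; gcongr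
    nlinarith
  refine hom_mono hcv h0 a (add_pos ht hs) hts ?_
  rw [mem_hom _ _ _ (add_pos ht hs)]
  have hxw : x - w = s • z := by
    have h1 : t'⁻¹ • (x - w) = ((n : ℝ) + 1) • z := by
      rw [← hxz, ← smul_sub]; congr 1; abel
    rw [hsdef, mul_smul, ← h1, smul_smul, mul_inv_cancel₀ ht'.ne', one_smul]
  have hmem := hcv hw hz (a := (t + s)⁻¹ * t) (b := (t + s)⁻¹ * s) (by positivity) (by positivity)
    (by field_simp)
  convert hmem using 1
  rw [mul_smul, mul_smul, ← smul_add, ← hxw, smul_smul t, mul_inv_cancel₀ ht.ne', one_smul]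
  congr 1; abel

lemma gain {𝔅 : Set (Set (EuclideanSpace ℝ (Fin n)))}
    (hB : ∀ B ∈ 𝔅, IsConvexBasisSet B) (hhom : HomothecyInvariant 𝔅)
    {μ : Measure (EuclideanSpace ℝ (Fin n))} [IsLocallyFiniteMeasure μ] (hμ : μ ≠ 0)
    {Δ : ℝ} (hΔ : 1 < Δ) (hdbl : DoublingWrt μ 𝔅 Δ)
    {m : ℕ} (hm : 1 + 2 * ((n : ℝ) + 1) ≤ 2 ^ m)
    {B : Set (EuclideanSpace ℝ (Fin n))} (hBm : B ∈ 𝔅) {E : Set (EuclideanSpace ℝ (Fin n))}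
    (hE : MeasurableSet E) (hBE : μ.real (B ∩ E) ≤ 1 / 2 * μ.real B) :
    (1 + 1 / (4 * Δ ^ m)) * μ.real (B ∩ E) ≤ μ.real (B ∩ haloSet μ 𝔅 E) := by
  have hBc := hB B hBm
  have hBfin := real_fin μ hBc
  obtain ⟨p, C, hC, hpC, h0, hd⟩ := exists_normalized hB hhom hBm
  have : IsUnifLocDoublingMeasure μ := unifDoubling hB hhom hdbl hC h0
  let G : Set (EuclideanSpace ℝ (Fin n)) := {z | z ∈ B ∧ ∀ η : ℝ, 0 < η → ∀ᶠ r in 𝓝[>] (0 : ℝ),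
      μ.real (Metric.closedBall z r \ E) ≤ η * μ.real (Metric.closedBall z r)}
  have hGae : ∀ᵐ z ∂μ, z ∈ B ∩ E → z ∈ G := by
    have := (ae_restrict_iff' hE).1 (density_pt μ hE)
    filter_upwards [this] with z hz hzBE
    exact ⟨hzBE.1, hz hzBE.2⟩
  have hsel : ∀ z ∈ G, ∃ t : ℝ, 0 < t ∧ t ≤ 1 ∧ μ.real ((((1 - t) • z) +ᵥ t • B) ∩ E) =
      3 / 4 * μ.real (((1 - t) • z) +ᵥ t • B) := fun z hz =>
    select_Q hB hhom hμ hdbl hBm hE hBE hz.1 hz.2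
  choose! t ht0 ht1 htE using hsel
  let Q : EuclideanSpace ℝ (Fin n) → Set (EuclideanSpace ℝ (Fin n)) :=
    fun z => ((1 - t z) • z) +ᵥ t z • B
  have hQm : ∀ z ∈ G, Q z ∈ 𝔅 := fun z hz => hom_mem' hhom hBm _ (ht0 z hz)
  have hQfin : ∀ z ∈ G, μ (Q z) ≠ ⊤ := fun z hz => real_fin μ (hB _ (hQm z hz))
  have hQsub : ∀ z ∈ G, Q z ⊆ B := fun z hz => Q_sub hBc (subset_closure hz.1) (ht0 z hz) (ht1 z hz)
  have hzQ : ∀ z ∈ G, z ∈ Q z := fun z hz => by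
    rw [mem_Q _ _ _ (ht0 z hz)]; simpa using hz.1
  have hQhalo : ∀ z ∈ G, Q z ⊆ haloSet μ 𝔅 E := fun z hz => by
    have hp := pos_measure hB hhom hμ hdbl (hQm z hz)
    refine haloSet_mem hE (hQm z hz) hp (hQfin z hz) ?_
    have h1 := ENNReal.toReal_pos hp.ne' (hQfin z hz)
    change 0 < μ.real _ at h1
    have h2 : μ.real (Q z ∩ E) = 3 / 4 * μ.real (Q z) := htE z hz
    linarith
  have hQdiff : ∀ z ∈ G, μ (Q z) = 4 * μ (Q z \ E) := fun z hz => by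
    have h2 : μ.real (Q z ∩ E) = 3 / 4 * μ.real (Q z) := htE z hz
    have h3 := measureReal_inter_add_sdiff (μ := μ) (s := Q z) hE (hQfin z hz)
    have hf : μ (Q z \ E) ≠ ⊤ := measure_ne_top_of_subset sdiff_subset (hQfin z hz)
    rw [← ENNReal.toReal_eq_toReal_iff' (hQfin z hz) (ENNReal.mul_ne_top (by simp) hf),
      ENNReal.toReal_mul]
    change μ.real (Q z) = _ * μ.real (Q z \ E)
    simp only [ENNReal.toReal_ofNat]
    linarith
  obtain ⟨u, huG, hudis, hucov⟩ := Vitali.exists_disjoint_subfamily_covering_enlargement Q G t 2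
    one_lt_two (fun z hz => (ht0 z hz).le) 1 ht1 (fun z hz => ⟨z, hzQ z hz⟩)
  have hucount : u.Countable := hudis.countable_of_isOpen (fun z hz => (hB _ (hQm z (huG hz))).2.2.1)
    (fun z hz => ⟨z, hzQ z (huG hz)⟩)
  let c : EuclideanSpace ℝ (Fin n) → EuclideanSpace ℝ (Fin n) := fun z => (1 - t z) • z + t z • p
  have hQc : ∀ z ∈ G, Q z = c z +ᵥ t z • C := fun z hz => by
    simp only [Q, c]
    rw [hpC, hom_shift _ _ _ (ht0 z hz)]
  have hGcov : G ⊆ ⋃ b ∈ u, (c b +ᵥ (2 ^ m * t b) • C) := by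
    intro z hz
    obtain ⟨b, hb, hne, hle⟩ := hucov z hz
    refine mem_biUnion hb ?_
    have hzz := hzQ z hz
    rw [hQc z hz] at hne hzz
    rw [hQc b (huG hb)] at hne
    exact engulf (hB C hC).2.2.2 h0 hd hm (ht0 b (huG hb)) (ht0 z hz) hle hne hzz
  let U : Set (EuclideanSpace ℝ (Fin n)) := ⋃ b ∈ u, (Q b \ E)
  have hUmeas : μ U = ∑' b : u, μ (Q b \ E) := by
    refine measure_biUnion hucount (hudis.mono fun b => sdiff_subset) ?_
    intro b hb
    exact (hB _ (hQm b (huG hb))).2.2.1.measurableSet.diff hE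
  have hmain : μ (B ∩ E) ≤ ENNReal.ofReal Δ ^ m * (4 * μ U) := by
    calc μ (B ∩ E) ≤ μ G := measure_mono_ae hGae
      _ ≤ μ (⋃ b ∈ u, (c b +ᵥ (2 ^ m * t b) • C)) := measure_mono hGcov
      _ ≤ ∑' b : u, μ (c b +ᵥ (2 ^ m * t b) • C) := measure_biUnion_le μ hucount _
      _ ≤ ∑' b : u, ENNReal.ofReal Δ ^ m * (4 * μ (Q b \ E)) := by
        refine ENNReal.tsum_le_tsum fun b => ?_
        rw [← hQdiff b (huG b.2), hQc b (huG b.2)]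
        exact center_dbl hB hhom hdbl hC h0 _ (ht0 b (huG b.2)) m
      _ = _ := by rw [ENNReal.tsum_mul_left, ENNReal.tsum_mul_left, hUmeas]
  have hUsub : U ⊆ (B ∩ haloSet μ 𝔅 E) \ E := by
    refine iUnion₂_subset fun b hb x hx => ?_
    exact ⟨⟨hQsub b (huG hb) hx.1, hQhalo b (huG hb) hx.1⟩, hx.2⟩
  have hUfin : μ U ≠ ⊤ :=
    measure_ne_top_of_subset (hUsub.trans (sdiff_subset.trans inter_subset_left)) hBfin
  have hmainR : μ.real (B ∩ E) ≤ Δ ^ m * (4 * μ.real U) := by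
    have := ENNReal.toReal_mono (ENNReal.mul_ne_top (by simp)
      (ENNReal.mul_ne_top (by simp) hUfin)) hmain
    rw [ENNReal.toReal_mul, ENNReal.toReal_mul, ENNReal.toReal_pow,
      ENNReal.toReal_ofReal (by linarith)] at this
    simpa [Measure.real] using this
  have hHfin : μ (B ∩ haloSet μ 𝔅 E) ≠ ⊤ := measure_ne_top_of_subset inter_subset_left hBfin
  have hsplit := measureReal_inter_add_sdiff (μ := μ) (s := B ∩ haloSet μ 𝔅 E) hE hHfin
  have h1 : μ.real U ≤ μ.real ((B ∩ haloSet μ 𝔅 E) \ E) :=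
    measureReal_mono hUsub (measure_ne_top_of_subset sdiff_subset hHfin)
  have h2 : μ.real (B ∩ E) ≤ μ.real (B ∩ haloSet μ 𝔅 E ∩ E) := by
    refine ENNReal.toReal_mono (measure_ne_top_of_subset inter_subset_left hHfin)
      (measure_mono_ae ?_)
    filter_upwards [hGae] with z hz hzBE
    have hzG := hz hzBE
    exact ⟨⟨hzBE.1, hQhalo z hzG (hzQ z hzG)⟩, hzBE.2⟩
  have hΔp : 0 < Δ ^ m := by positivity
  have h3 : 1 / (4 * Δ ^ m) * μ.real (B ∩ E) ≤ μ.real U := by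
    rw [one_div, inv_mul_le_iff₀ (by positivity)]
    linarith
  linarith

end helpers4

section helpers5

variable {n : ℕ}

lemma halo_iter {𝔅 : Set (Set (EuclideanSpace ℝ (Fin n)))}
    (hB : ∀ B ∈ 𝔅, IsConvexBasisSet B) (hhom : HomothecyInvariant 𝔅)
    {μ : Measure (EuclideanSpace ℝ (Fin n))} [IsLocallyFiniteMeasure μ] (hμ : μ ≠ 0)
    {Δ : ℝ} (hΔ : 1 < Δ) (hdbl : DoublingWrt μ 𝔅 Δ)
    {m : ℕ} (hm : 1 + 2 * ((n : ℝ) + 1) ≤ 2 ^ m)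
    {B : Set (EuclideanSpace ℝ (Fin n))} (hBm : B ∈ 𝔅) (k : ℕ) :
    ∀ E : Set (EuclideanSpace ℝ (Fin n)), MeasurableSet E →
      1 / 2 * μ.real B < (1 + 1 / (4 * Δ ^ m)) ^ k * μ.real (B ∩ E) →
      B ⊆ (haloSet μ 𝔅)^[k + 1] E := by
  have hp := pos_measure hB hhom hμ hdbl hBm
  have hfin := real_fin μ (hB B hBm)
  have hpR := ENNReal.toReal_pos hp.ne' hfin
  change 0 < μ.real B at hpR
  have hε : 0 < 1 / (4 * Δ ^ m) := by positivity
  set q := 1 + 1 / (4 * Δ ^ m) with hq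
  have hq1 : 1 ≤ q := by linarith
  induction k with
  | zero =>
    intro E hE h
    simpa using haloSet_mem hE hBm hp hfin (by simpa using h)
  | succ k ih =>
    intro E hE h
    rw [Function.iterate_succ_apply]
    apply ih _ (haloSet_open hB E).measurableSet
    by_cases h2 : μ.real (B ∩ E) ≤ 1 / 2 * μ.real B
    · have hg := gain hB hhom hμ hΔ hdbl hm hBm hE h2
      rw [pow_succ, mul_assoc] at h
      exact h.trans_le (by gcongr)
    · push Not at h2
      have hsub := haloSet_mem hE hBm hp hfin h2
      rw [inter_eq_left.2 hsub]
      have : 1 ≤ q ^ k := one_le_pow₀ hq1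
      nlinarith

lemma nu_iter {𝔅 : Set (Set (EuclideanSpace ℝ (Fin n)))}
    (hB : ∀ B ∈ 𝔅, IsConvexBasisSet B)
    {μ ν : Measure (EuclideanSpace ℝ (Fin n))} {c : ℝ}
    (htaub : ∀ E : Set (EuclideanSpace ℝ (Fin n)), MeasurableSet E →
      ν (haloSet μ 𝔅 E) ≤ ENNReal.ofReal c * ν E) (k : ℕ) :
    ∀ E : Set (EuclideanSpace ℝ (Fin n)), MeasurableSet E →
      ν ((haloSet μ 𝔅)^[k] E) ≤ ENNReal.ofReal c ^ k * ν E := by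
  induction k with
  | zero => intro E hE; simp
  | succ k ih =>
    intro E hE
    rw [Function.iterate_succ_apply]
    refine (ih _ (haloSet_open hB E).measurableSet).trans ?_
    rw [pow_succ, mul_assoc]
    gcongr
    exact htaub E hE

lemma dens_zero {𝔅 : Set (Set (EuclideanSpace ℝ (Fin n)))}
    (hB : ∀ B ∈ 𝔅, IsConvexBasisSet B) (hhom : HomothecyInvariant 𝔅)
    {μ ν : Measure (EuclideanSpace ℝ (Fin n))} [IsLocallyFiniteMeasure μ]
    [IsLocallyFiniteMeasure ν] (hμ : μ ≠ 0)
    {Δ : ℝ} (hΔ : 1 < Δ) (hdbl : DoublingWrt μ 𝔅 Δ) {c : ℝ}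
    (htaub : ∀ E : Set (EuclideanSpace ℝ (Fin n)), MeasurableSet E →
      ν (haloSet μ 𝔅 E) ≤ ENNReal.ofReal c * ν E)
    {E : Set (EuclideanSpace ℝ (Fin n))} (hE : MeasurableSet E) (hEfin : ν E ≠ ⊤)
    {γ : ℝ} (hγ : 0 < γ) :
    ∀ᵐ x ∂ν, x ∉ E → ∃ r : ℝ≥0∞, 0 < r ∧ ∀ B ∈ 𝔅, x ∈ B → Metric.ediam B < r →
      μ.real (B ∩ E) ≤ γ * μ.real B := by
  obtain ⟨m, hm⟩ := pow_unbounded_of_one_lt (1 + 2 * ((n : ℝ) + 1)) (one_lt_two (α := ℝ))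
  have hε : 0 < 1 / (4 * Δ ^ m) := by positivity
  obtain ⟨k, hk⟩ := pow_unbounded_of_one_lt (1 / (2 * γ))
    (show 1 < 1 + 1 / (4 * Δ ^ m) by linarith)
  rw [ae_iff]
  set Bad := {x | ¬(x ∉ E → ∃ r : ℝ≥0∞, 0 < r ∧ ∀ B ∈ 𝔅, x ∈ B → Metric.ediam B < r →
      μ.real (B ∩ E) ≤ γ * μ.real B)} with hBad
  by_contra hne
  obtain ⟨δ, hδ, hδlt⟩ := ENNReal.exists_nnreal_pos_mul_lt
    (a := ENNReal.ofReal c ^ (k + 1)) (by simp) hne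
  obtain ⟨K, hKE, hK, hKlt⟩ := hE.exists_isClosed_sdiff_lt hEfin
    (ε := (δ : ℝ≥0∞)) (by exact_mod_cast hδ.ne')
  have hsub : Bad ⊆ (haloSet μ 𝔅)^[k + 1] (E \ K) := by
    intro x hx
    simp only [hBad, mem_setOf_eq, not_forall, not_exists, not_and, exists_prop] at hx
    obtain ⟨hxE, hx⟩ := hx
    have hxK : Kᶜ ∈ 𝓝 x := hK.isOpen_compl.mem_nhds fun h => hxE (hKE h)
    obtain ⟨r, hr, hrK⟩ := EMetric.mem_nhds_iff.1 hxK
    obtain ⟨B, hBm, hxB, hdiam, hlt⟩ := hx r hr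
    push Not at hlt
    have hBK : B ∩ E = B ∩ (E \ K) := by
      ext y
      refine ⟨fun h => ⟨h.1, h.2, ?_⟩, fun h => ⟨h.1, h.2.1⟩⟩
      apply hrK
      exact lt_of_le_of_lt (Metric.edist_le_ediam_of_mem h.1 hxB) hdiam
    rw [hBK] at hlt
    have hp := pos_measure hB hhom hμ hdbl hBm
    have hpR := ENNReal.toReal_pos hp.ne' (real_fin μ (hB B hBm))
    change 0 < μ.real B at hpR
    refine halo_iter hB hhom hμ hΔ hdbl hm.le hBm k _ (hE.diff hK.measurableSet) ?_ hxB
    rw [div_lt_iff₀ (by positivity)] at hk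
    set q := (1 + 1 / (4 * Δ ^ m)) ^ k
    have hqpos : 0 < q := by positivity
    nlinarith [mul_lt_mul_of_pos_left hlt hqpos, mul_lt_mul_of_pos_right hk hpR]
  have h1 := (measure_mono hsub).trans
    (nu_iter hB htaub (k + 1) _ (hE.diff hK.measurableSet))
  have h2 : ν Bad ≤ δ * ENNReal.ofReal c ^ (k + 1) := by
    refine h1.trans ?_
    rw [mul_comm]
    gcongr
  exact absurd hδlt (not_lt.2 h2)

lemma dens_zero' {𝔅 : Set (Set (EuclideanSpace ℝ (Fin n)))}
    (hB : ∀ B ∈ 𝔅, IsConvexBasisSet B) (hhom : HomothecyInvariant 𝔅)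
    {μ ν : Measure (EuclideanSpace ℝ (Fin n))} [IsLocallyFiniteMeasure μ]
    [IsLocallyFiniteMeasure ν] (hμ : μ ≠ 0)
    {Δ : ℝ} (hΔ : 1 < Δ) (hdbl : DoublingWrt μ 𝔅 Δ) {c : ℝ}
    (htaub : ∀ E : Set (EuclideanSpace ℝ (Fin n)), MeasurableSet E →
      ν (haloSet μ 𝔅 E) ≤ ENNReal.ofReal c * ν E)
    {E : Set (EuclideanSpace ℝ (Fin n))} (hE : MeasurableSet E) :
    ∀ᵐ x ∂ν, x ∉ E → ∀ γ : ℝ, 0 < γ → ∃ r : ℝ≥0∞, 0 < r ∧ ∀ B ∈ 𝔅, x ∈ B →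
      Metric.ediam B < r → μ.real (B ∩ E) ≤ γ * μ.real B := by
  have h : ∀ j i : ℕ, ∀ᵐ x ∂ν, x ∉ E ∩ Metric.ball 0 j → ∃ r : ℝ≥0∞, 0 < r ∧ ∀ B ∈ 𝔅, x ∈ B →
      Metric.ediam B < r → μ.real (B ∩ (E ∩ Metric.ball 0 j)) ≤ 1 / ((i : ℝ) + 1) * μ.real B :=
    fun j i => dens_zero hB hhom hμ hΔ hdbl htaub (hE.inter measurableSet_ball)
      (Metric.isBounded_ball.subset inter_subset_right).measure_lt_top.ne (by positivity)
  filter_upwards [ae_all_iff.2 fun j => ae_all_iff.2 (h j)] with x hx hxE γ hγ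
  obtain ⟨i, hi⟩ := exists_nat_one_div_lt hγ
  obtain ⟨j, hj⟩ := exists_nat_gt ‖x‖
  obtain ⟨r, hr, hrB⟩ := hx j i (fun h => hxE h.1)
  have hxb : Metric.ball (0 : EuclideanSpace ℝ (Fin n)) j ∈ 𝓝 x :=
    Metric.isOpen_ball.mem_nhds (by simpa using hj)
  obtain ⟨r', hr', hrb⟩ := EMetric.mem_nhds_iff.1 hxb
  refine ⟨min r r', lt_min hr hr', fun B hBm hxB hd => ?_⟩
  have h1 := hrB B hBm hxB (hd.trans_le (min_le_left _ _))
  have hBb : B ⊆ Metric.ball 0 j := fun y hy => hrb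
    (lt_of_le_of_lt (Metric.edist_le_ediam_of_mem hy hxB) (hd.trans_le (min_le_right _ _)))
  have h2 : B ∩ (E ∩ Metric.ball 0 j) = B ∩ E := by
    ext y
    exact ⟨fun h => ⟨h.1, h.2.1⟩, fun h => ⟨h.1, h.2, hBb h.1⟩⟩
  rw [h2] at h1
  refine h1.trans ?_
  have : 0 ≤ μ.real B := measureReal_nonneg
  gcongr

lemma avg_bound (μ : Measure (EuclideanSpace ℝ (Fin n)))
    {B : Set (EuclideanSpace ℝ (Fin n))} (hBo : MeasurableSet B) (hfin : μ B ≠ ⊤)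
    (hpos : 0 < μ.real B)
    {f : EuclideanSpace ℝ (Fin n) → ℝ} (hf : Measurable f) {M : ℝ} (hM : ∀ x, |f x| ≤ M)
    {y q₁ q₂ ε : ℝ} (hy : |y| ≤ M) (hε : 0 ≤ ε) (h1 : y - ε ≤ q₁) (h2 : q₂ ≤ y + ε) {γ : ℝ}
    (hg1 : μ.real (B ∩ {x | f x < q₁}) ≤ γ * μ.real B)
    (hg2 : μ.real (B ∩ {x | q₂ < f x}) ≤ γ * μ.real B) :
    |(∫ x in B, f x ∂μ) / μ.real B - y| ≤ ε + 4 * M * γ := by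
  have hM0 : 0 ≤ M := (abs_nonneg y).trans hy
  have hfinm : IsFiniteMeasure (μ.restrict B) := ⟨by simpa using hfin.lt_top⟩
  have hfi : Integrable f (μ.restrict B) :=
    Integrable.of_bound hf.aestronglyMeasurable M (Eventually.of_forall hM)
  have hA1 : MeasurableSet {x | f x < q₁} := measurableSet_lt hf measurable_const
  have hA2 : MeasurableSet {x | q₂ < f x} := measurableSet_lt measurable_const hf
  have hi1 : Integrable (({x | f x < q₁} : Set _).indicator fun _ => 2 * M) (μ.restrict B) :=
    (integrable_const _).indicator hA1
  have hi2 : Integrable (({x | q₂ < f x} : Set _).indicator fun _ => 2 * M) (μ.restrict B) :=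
    (integrable_const _).indicator hA2
  have hpt : ∀ x, |f x - y| ≤ ε + ({x | f x < q₁} : Set _).indicator (fun _ => 2 * M) x +
      ({x | q₂ < f x} : Set _).indicator (fun _ => 2 * M) x := by
    intro x
    have hx := abs_le.1 (hM x)
    have hyy := abs_le.1 hy
    simp only [indicator_apply, mem_setOf_eq]
    rw [abs_le]
    split_ifs <;> constructor <;> linarith
  have e1 : (∫ x in B, f x ∂μ) / μ.real B - y = (∫ x in B, (f x - y) ∂μ) / μ.real B := by
    rw [integral_sub hfi (integrable_const _), integral_const]
    simp only [measureReal_restrict_apply_univ, smul_eq_mul]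
    field_simp
  rw [e1, abs_div, abs_of_pos hpos, div_le_iff₀ hpos]
  have hi3 : Integrable (fun x => ε + ({x | f x < q₁} : Set _).indicator (fun _ => 2 * M) x)
      (μ.restrict B) := (integrable_const _).add hi1
  calc |∫ x in B, (f x - y) ∂μ| ≤ ∫ x in B, |f x - y| ∂μ := abs_integral_le_integral_abs
    _ ≤ ∫ x in B, (ε + ({x | f x < q₁} : Set _).indicator (fun _ => 2 * M) x +
      ({x | q₂ < f x} : Set _).indicator (fun _ => 2 * M) x) ∂μ :=
        integral_mono (hfi.sub (integrable_const _)).abs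
          (((integrable_const _).add hi1).add hi2) hpt
    _ = ε * μ.real B + 2 * M * μ.real (B ∩ {x | f x < q₁}) +
        2 * M * μ.real (B ∩ {x | q₂ < f x}) := by
      rw [integral_add hi3 hi2, integral_add (integrable_const _) hi1,
        integral_indicator hA1, integral_indicator hA2]
      simp only [integral_const, smul_eq_mul, measureReal_restrict_apply_univ,
        measureReal_restrict_apply hA1, measureReal_restrict_apply hA2]
      rw [inter_comm B, inter_comm B]
      ring
    _ ≤ ε * μ.real B + 2 * M * (γ * μ.real B) + 2 * M * (γ * μ.real B) := by gcongr
    _ = _ := by ring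

end helpers5

/-- If the Tauberian condition at level `1/2` holds for `M_{𝔅,μ}` with
respect to `ν`, then `𝔅` differentiates `L^∞(ν)` with respect to `μ`: for every bounded
Borel measurable `f`, for `ν`-a.e. `x`, every sequence of sets of `𝔅` containing `x`, of
positive `μ`-measure and with diameters tending to `0`, has `μ`-averages of `f`
converging to `f x`. -/
theorem statement2 (n : ℕ) (𝔅 : Set (Set (EuclideanSpace ℝ (Fin n))))
    (hB : ∀ B ∈ 𝔅, IsConvexBasisSet B) (hhom : HomothecyInvariant 𝔅)
    (μ ν : Measure (EuclideanSpace ℝ (Fin n)))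
    (hlocμ : IsLocallyFiniteMeasure μ) (hlocν : IsLocallyFiniteMeasure ν)
    (hμ : μ ≠ 0) (hdbl : ∃ Δ : ℝ, 1 < Δ ∧ DoublingWrt μ 𝔅 Δ)
    (htaub : ∃ c : ℝ, 0 < c ∧ ∀ E : Set (EuclideanSpace ℝ (Fin n)), MeasurableSet E →
      ν {x | (1 / 2 : ℝ≥0∞) < maxOp μ 𝔅 (E.indicator 1) x} ≤ ENNReal.ofReal c * ν E)
    (f : EuclideanSpace ℝ (Fin n) → ℝ) (hf : Measurable f)
    (hfbd : ∃ M : ℝ, ∀ x, |f x| ≤ M) :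
    ∀ᵐ x ∂ν, ∀ B : ℕ → Set (EuclideanSpace ℝ (Fin n)),
      (∀ k, B k ∈ 𝔅) → (∀ k, x ∈ B k) → (∀ k, 0 < μ (B k)) →
      Tendsto (fun k => EMetric.diam (B k)) atTop (𝓝 0) →
      Tendsto (fun k => (∫ y in B k, f y ∂μ) / (μ (B k)).toReal) atTop (𝓝 (f x)) := by
  obtain ⟨Δ, hΔ, hdbl⟩ := hdbl
  obtain ⟨c, -, htaub⟩ := htaub
  obtain ⟨M, hM⟩ := hfbd
  have hae1 : ∀ᵐ x ∂ν, ∀ q : ℚ, x ∉ {x | f x < (q : ℝ)} → ∀ γ > 0, ∃ r : ℝ≥0∞, 0 < r ∧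
      ∀ B ∈ 𝔅, x ∈ B → Metric.ediam B < r →
        μ.real (B ∩ {x | f x < (q : ℝ)}) ≤ γ * μ.real B :=
    ae_all_iff.2 fun q => dens_zero' hB hhom hμ hΔ hdbl htaub
      (measurableSet_lt hf measurable_const)
  have hae2 : ∀ᵐ x ∂ν, ∀ q : ℚ, x ∉ {x | (q : ℝ) < f x} → ∀ γ > 0, ∃ r : ℝ≥0∞, 0 < r ∧
      ∀ B ∈ 𝔅, x ∈ B → Metric.ediam B < r →
        μ.real (B ∩ {x | (q : ℝ) < f x}) ≤ γ * μ.real B :=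
    ae_all_iff.2 fun q => dens_zero' hB hhom hμ hΔ hdbl htaub
      (measurableSet_lt measurable_const hf)
  filter_upwards [hae1, hae2] with x hx1 hx2 B hBm hxB hpos hdiam
  rw [Metric.tendsto_nhds]
  intro ε hε
  obtain ⟨q₁, hq1, hq1'⟩ := exists_rat_btwn (show f x - ε / 4 < f x by linarith)
  obtain ⟨q₂, hq2, hq2'⟩ := exists_rat_btwn (show f x < f x + ε / 4 by linarith)
  have hM0 : 0 ≤ M := (abs_nonneg _).trans (hM x)
  have hγ : 0 < ε / (8 * (M + 1)) := by positivity
  obtain ⟨r₁, hr1, hd1⟩ := hx1 q₁ (fun h => lt_asymm hq1' h) _ hγ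
  obtain ⟨r₂, hr2, hd2⟩ := hx2 q₂ (fun h => lt_asymm hq2 h) _ hγ
  filter_upwards [hdiam.eventually (gt_mem_nhds hr1), hdiam.eventually (gt_mem_nhds hr2)]
    with k hk1 hk2
  have hfin : μ (B k) ≠ ⊤ := real_fin μ (hB _ (hBm k))
  have hp : 0 < μ.real (B k) := ENNReal.toReal_pos (hpos k).ne' hfin
  have key := avg_bound μ (hB _ (hBm k)).2.2.1.measurableSet hfin hp hf hM (hM x)
    (show 0 ≤ ε / 4 by positivity) hq1.le hq2'.le
    (hd1 _ (hBm k) (hxB k) hk1) (hd2 _ (hBm k) (hxB k) hk2)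
  have h4 : 4 * M * (ε / (8 * (M + 1))) ≤ ε / 2 := by
    have : 4 * M * (ε / (8 * (M + 1))) = ε / 2 * (M / (M + 1)) := by field_simp; ring
    rw [this]
    have : M / (M + 1) ≤ 1 := (div_le_one (by positivity)).2 (by linarith)
    nlinarith
  rw [Real.dist_eq]
  refine lt_of_le_of_lt key ?_
  linarith
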